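/- Let F be a number field with ring of integers 𝔬, (V, φ) nondegenerate of dimension n > 1, L an 𝔬-maximal lattice, h ∈ V with φ[h] = q ≠ 0, W = (Fh)^⊥, M an 𝔬-maximal lattice in W with respect to ψ = φ|_W. Then L ∩ W is 𝔬-maximal in W if and only if φ[h]·(2φ(h,L))^{-2} = [M̃/M]·(2[L̃/L])^{-1} as fractional ideals. -/

import Mathlib

section Defs

variable (𝔬 : Type*) [CommRing 𝔬] (F : Type*) [Field F] [Algebra 𝔬 F]
variable (V : Type*) [AddCommGroup V] [Module F V] [Module 𝔬 V] [IsScalarTower 𝔬 F V]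

/-- `L` is an `𝔬`-lattice in the `F`-vector space `V`: a finitely generated
`𝔬`-submodule containing an `F`-basis of `V`. -/
def IsLattice (L : Submodule 𝔬 V) : Prop :=
  L.FG ∧ Submodule.span F (L : Set V) = ⊤

/-- The `𝔬`-ideal `[M/L]` of `F`, generated by `det α` over all `F`-linear
automorphisms `α` of `V` with `Mα ⊆ L`. -/
def latticeIndex (M L : Submodule 𝔬 V) : Submodule 𝔬 F :=
  Submodule.span 𝔬 {c : F | ∃ α : V ≃ₗ[F] V,
    c = LinearMap.det (α : V →ₗ[F] V) ∧ ∀ x ∈ M, α x ∈ L}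

/-- The dual lattice `L̃ = {x ∈ V ∣ 2φ(x, L) ⊆ 𝔬}`. -/
def dualLattice (φ : LinearMap.BilinForm F V) (L : Submodule 𝔬 V) : Submodule 𝔬 V where
  carrier := {x : V | ∀ y ∈ L, 2 * φ x y ∈ (algebraMap 𝔬 F).range}
  zero_mem' := by
    intro y hy
    exact ⟨0, by simp⟩
  add_mem' := by
    intro a b ha hb y hy
    obtain ⟨u, hu⟩ := ha y hy
    obtain ⟨v, hv⟩ := hb y hy
    refine ⟨u + v, ?_⟩
    rw [map_add, hu, hv, map_add, LinearMap.add_apply]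
    ring
  smul_mem' := by
    intro c x hx y hy
    obtain ⟨u, hu⟩ := hx y hy
    refine ⟨c * u, ?_⟩
    have h1 : (c • x : V) = (algebraMap 𝔬 F c) • x := (algebraMap_smul F c x).symm
    rw [map_mul, hu, h1, map_smul, LinearMap.smul_apply, smul_eq_mul]
    ring

/-- An `𝔬`-maximal lattice with respect to `φ`: maximal among the lattices `N`
with `φ[N] ⊆ 𝔬`. -/
def IsMaximalLattice (φ : LinearMap.BilinForm F V) (L : Submodule 𝔬 V) : Prop :=
  IsLattice 𝔬 F V L ∧ (∀ x ∈ L, φ x x ∈ (algebraMap 𝔬 F).range) ∧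
    ∀ L' : Submodule 𝔬 V, IsLattice 𝔬 F V L' →
      (∀ x ∈ L', φ x x ∈ (algebraMap 𝔬 F).range) → L ≤ L' → L' = L

end Defs

namespace MaxLat

open Module

section Local

set_option linter.unusedSectionVars false
set_option linter.style.haveILetI false
set_option linter.unusedVariables false
set_option linter.unnecessarySimpa false

variable {S : Type*} [CommRing S] [IsDomain S] {K : Type*} [Field K] [Algebra S K]
  [IsFractionRing S K]
variable {V : Type*} [AddCommGroup V] [Module K V] [Module S V] [IsScalarTower S K V]
variable {ι : Type*} [Fintype ι] [DecidableEq ι]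

/-- index of lattices spanned by bases -/
theorem latticeIndex_span (e f : Basis ι K V) :
    latticeIndex S K V (Submodule.span S (Set.range e)) (Submodule.span S (Set.range f)) =
      Submodule.span S {e.det f} := by
  apply le_antisymm
  · refine Submodule.span_le.2 ?_
    rintro c ⟨α, rfl, hα⟩
    have h1 : ∀ i, α (e i) ∈ Submodule.span S (Set.range f) := fun i =>
      hα _ (Submodule.subset_span ⟨i, rfl⟩)
    have h2 : ∀ i j, ∃ s : S, algebraMap S K s = f.toMatrix (fun i => α (e i)) i j := by
      intro i j
      exact (f.mem_span_iff_repr_mem S _).1 (h1 j) i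
    choose T hT using h2
    have h3 : f.det (fun i => α (e i)) = algebraMap S K (Matrix.det (Matrix.of T)) := by
      rw [Basis.det_apply, RingHom.map_det]
      congr 1
      ext i j
      simp [hT]
    have h4 : LinearMap.det (α : V →ₗ[K] V) = e.det f * f.det (fun i => α (e i)) := by
      have : e.det (fun i => α (e i)) = LinearMap.det (α : V →ₗ[K] V) := by
        have := Basis.det_comp e (α : V →ₗ[K] V) e
        simpa [Function.comp_def, e.det_self] using this
      rw [← this]
      have := congrArg Matrix.det (Basis.toMatrix_mul_toMatrix (b := e) (b' := f) (fun i => α (e i)))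
      rw [Matrix.det_mul] at this
      simpa [Basis.det_apply] using this.symm
    rw [SetLike.mem_coe, h4, h3, mul_comm, ← Algebra.smul_def]
    exact Submodule.smul_mem _ _ (Submodule.mem_span_singleton_self _)
  · refine Submodule.span_le.2 ?_
    rintro c rfl
    refine Submodule.subset_span ⟨e.equiv f (Equiv.refl ι), ?_, ?_⟩
    · have := Basis.det_comp e ((e.equiv f (Equiv.refl ι) : V ≃ₗ[K] V) : V →ₗ[K] V) e
      simpa [Function.comp_def, e.det_self] using this
    · intro x hx
      induction hx using Submodule.span_induction with
      | mem x hx =>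
        obtain ⟨i, rfl⟩ := hx
        exact Submodule.subset_span ⟨i, by simp⟩
      | zero => simp
      | add x y _ _ hx hy => rw [map_add]; exact add_mem hx hy
      | smul a x _ hx =>
        rw [← algebraMap_smul K a x, map_smul, algebraMap_smul]
        exact Submodule.smul_mem _ _ hx

theorem dualLattice_eq (φ : LinearMap.BilinForm K V) (L : Submodule S V) :
    dualLattice S K V φ L = LinearMap.BilinForm.dualSubmodule ((2 : K) • φ) L := by
  ext x
  change (∀ y ∈ L, 2 * φ x y ∈ (algebraMap S K).range) ↔
    ∀ y ∈ L, ((2 : K) • φ) x y ∈ (1 : Submodule S K)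
  simp [Submodule.mem_one]

/-- Gram determinant for `2φ`. -/
noncomputable def gram (φ : LinearMap.BilinForm K V) (e : Basis ι K V) : K :=
  (LinearMap.BilinForm.toMatrix e ((2 : K) • φ)).det

theorem gram_change (φ : LinearMap.BilinForm K V) (e f : Basis ι K V) :
    gram φ f = (e.det f) ^ 2 * gram φ e := by
  unfold gram
  rw [← LinearMap.BilinForm.toMatrix_mul_basis_toMatrix e f]
  rw [Matrix.det_mul, Matrix.det_mul, Matrix.det_transpose, Basis.det_apply]
  ring

theorem dualBasis_det (φ : LinearMap.BilinForm K V)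
    (hB : LinearMap.BilinForm.Nondegenerate ((2 : K) • φ)) (e : Basis ι K V) :
    (LinearMap.BilinForm.dualBasis ((2 : K) • φ) hB e).det e = gram φ e := by
  unfold gram
  rw [Basis.det_apply, ← Matrix.det_transpose]
  congr 1
  ext i j
  rw [Matrix.transpose_apply, Basis.toMatrix_apply, LinearMap.BilinForm.dualBasis_repr_apply,
    LinearMap.BilinForm.toMatrix_apply]

theorem gram_ne_zero (φ : LinearMap.BilinForm K V)
    (hB : LinearMap.BilinForm.Nondegenerate ((2 : K) • φ)) (e : Basis ι K V) : gram φ e ≠ 0 := by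
  rw [← dualBasis_det φ hB]
  exact (Basis.isUnit_det _ e).ne_zero

theorem disc_eq (φ : LinearMap.BilinForm K V)
    (hB : LinearMap.BilinForm.Nondegenerate ((2 : K) • φ)) (e : Basis ι K V) :
    latticeIndex S K V (dualLattice S K V φ (Submodule.span S (Set.range e)))
      (Submodule.span S (Set.range e)) = Submodule.span S {gram φ e} := by
  rw [dualLattice_eq, LinearMap.BilinForm.dualSubmodule_span_of_basis _ hB, latticeIndex_span,
    dualBasis_det]

variable [IsPrincipalIdealRing S] [FiniteDimensional K V]

theorem exists_basis (X : Submodule S V) (hX : IsLattice S K V X) :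
    ∃ e : Basis (Fin (finrank K V)) K V, Submodule.span S (Set.range e) = X := by
  haveI : Submodule.IsLattice K X := ⟨hX.1, hX.2⟩
  haveI := Submodule.IsLattice.free K X
  have hr : finrank S X = finrank K V :=
    congrArg Cardinal.toNat (Submodule.IsLattice.rank' K X)
  let b : Basis (Fin (finrank K V)) S X := Module.finBasisOfFinrankEq S X hr
  refine ⟨b.extendOfIsLattice K, ?_⟩
  have : Set.range (b.extendOfIsLattice K) = X.subtype '' Set.range b := by
    rw [← Set.range_comp]
    congr 1
    ext i
    simp
  rw [this, ← Submodule.map_span, b.span_eq, Submodule.map_top, Submodule.range_subtype]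

theorem isLattice_span (e : Basis ι K V) : IsLattice S K V (Submodule.span S (Set.range e)) := by
  refine ⟨Submodule.fg_span (Set.finite_range e), ?_⟩
  rw [Submodule.span_span_of_tower, e.span_eq]

/-- Elementary divisors for two lattices. -/
theorem exists_smith (X Y : Submodule S V) (hX : IsLattice S K V X) (hY : IsLattice S K V Y) :
    ∃ (e : Basis (Fin (finrank K V)) K V) (a : Fin (finrank K V) → Kˣ),
      Submodule.span S (Set.range e) = X ∧ Submodule.span S (Set.range (e.unitsSMul a)) = Y := by
  obtain ⟨x, rfl⟩ := exists_basis X hX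
  obtain ⟨y, rfl⟩ := exists_basis Y hY
  set X := Submodule.span S (Set.range x) with hXdef
  obtain ⟨c, hc⟩ := IsLocalization.exist_integer_multiples_of_finite (nonZeroDivisors S)
    (fun ij : Fin (finrank K V) × Fin (finrank K V) => x.repr (y ij.1) ij.2)
  have hc0 : algebraMap S K (c : S) ≠ 0 := IsFractionRing.to_map_ne_zero_of_mem_nonZeroDivisors c.2
  let cu : Kˣ := Units.mk0 _ hc0
  let y' : Basis (Fin (finrank K V)) K V := y.unitsSMul (fun _ => cu)
  have hy' : Submodule.span S (Set.range y') ≤ X := by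
    refine Submodule.span_le.2 ?_
    rintro _ ⟨i, rfl⟩
    rw [SetLike.mem_coe, hXdef, x.mem_span_iff_repr_mem S]
    intro j
    obtain ⟨s, hs⟩ := hc (i, j)
    refine ⟨s, ?_⟩
    rw [hs, Basis.unitsSMul_apply, Units.smul_def, map_smul]
    simp [cu, Algebra.smul_def]
  haveI : Submodule.IsLattice K X := ⟨hX.1, hX.2⟩
  haveI := Submodule.IsLattice.free K X
  have hL' := isLattice_span (S := S) y'
  haveI : Submodule.IsLattice K (Submodule.span S (Set.range y')) := ⟨hL'.1, hL'.2⟩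
  have hr : finrank S X = finrank K V :=
    congrArg Cardinal.toNat (Submodule.IsLattice.rank' K X)
  have hr' : finrank S (Submodule.span S (Set.range y')) = finrank K V :=
    congrArg Cardinal.toNat (Submodule.IsLattice.rank' K _)
  let b : Basis (Fin (finrank K V)) S X := Module.finBasisOfFinrankEq S X hr
  let N : Submodule S X := (Submodule.span S (Set.range y')).comap X.subtype
  have hN : finrank S N = finrank S X := by
    rw [hr, ← hr']
    exact (Submodule.comapSubtypeEquivOfLe hy').finrank_eq
  obtain ⟨b', a, ab, hab⟩ := Submodule.exists_smith_normal_form_of_rank_eq (N := N) b hN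
  have ha : ∀ i, algebraMap S K (a i) ≠ 0 := by
    intro i hi
    have : a i = 0 := by simpa using hi
    apply ab.ne_zero i
    ext
    simp [hab, this]
  refine ⟨b'.extendOfIsLattice K, fun i => cu⁻¹ * Units.mk0 _ (ha i), ?_, ?_⟩
  · have : Set.range (b'.extendOfIsLattice K) = X.subtype '' Set.range b' := by
      rw [← Set.range_comp]
      congr 1
      ext i
      simp
    rw [this, ← Submodule.map_span, b'.span_eq, Submodule.map_top, Submodule.range_subtype]
  · have h1 : Submodule.span S (Set.range fun i => (a i) • ((b' i : X) : V)) =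
        Submodule.span S (Set.range y') := by
      have : (Set.range fun i => (a i) • ((b' i : X) : V)) =
          X.subtype '' (N.subtype '' Set.range ab) := by
        rw [← Set.range_comp, ← Set.range_comp]
        congr 1
        ext i
        simp [hab]
      rw [this, ← Submodule.map_span, ← Submodule.map_span, ab.span_eq, Submodule.map_top,
        Submodule.range_subtype, Submodule.map_comap_eq, Submodule.range_subtype]
      exact inf_eq_right.2 hy'
    let m : V →ₗ[S] V := (LinearMap.lsmul K V ((cu⁻¹ : Kˣ) : K)).restrictScalars S
    have h2 := congrArg (Submodule.map m) h1
    rw [Submodule.map_span, Submodule.map_span, ← Set.range_comp, ← Set.range_comp] at h2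
    convert h2 using 3
    · ext i
      simp only [m, Basis.unitsSMul_apply, Units.smul_def, mul_smul, Function.comp_apply,
        Units.val_mul, Units.val_mk0, Basis.extendOfIsLattice_apply, algebraMap_smul,
        LinearMap.restrictScalars_apply, LinearMap.lsmul_apply]
    · ext i
      simp [m, y', Basis.unitsSMul_apply, Units.smul_def]

theorem det_mem {e f : Basis ι K V}
    (hle : Submodule.span S (Set.range f) ≤ Submodule.span S (Set.range e)) :
    ∃ T : Matrix ι ι S, e.toMatrix f = T.map (algebraMap S K) ∧ e.det f = algebraMap S K T.det := by
  have h2 : ∀ i j, ∃ s : S, algebraMap S K s = e.toMatrix f i j := by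
    intro i j
    exact (e.mem_span_iff_repr_mem S _).1 (hle (Submodule.subset_span ⟨j, rfl⟩)) i
  choose T hT using h2
  have h1 : e.toMatrix f = (Matrix.of T).map (algebraMap S K) := by
    ext i j
    simp [hT]
  refine ⟨Matrix.of T, h1, ?_⟩
  rw [Basis.det_apply, h1, RingHom.map_det]
  rfl

theorem span_le_of_gram {φ : LinearMap.BilinForm K V}
    (hB : LinearMap.BilinForm.Nondegenerate ((2 : K) • φ)) {e f : Basis ι K V}
    (hle : Submodule.span S (Set.range f) ≤ Submodule.span S (Set.range e))
    (hg : ∃ s : S, gram φ e = algebraMap S K s * gram φ f) :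
    Submodule.span S (Set.range e) ≤ Submodule.span S (Set.range f) := by
  obtain ⟨T, hT, hdet⟩ := det_mem hle
  obtain ⟨s, hs⟩ := hg
  have h1 := gram_change φ e f
  rw [hdet] at h1
  have h2 := gram_ne_zero φ hB e
  have h3 : algebraMap S K (T.det * (T.det * s)) = 1 := by
    rw [h1] at hs
    simp only [map_mul]
    apply mul_right_cancel₀ h2
    linear_combination - hs
  have h4 : IsUnit T.det := by
    refine .of_mul_eq_one (T.det * s) ?_
    exact IsFractionRing.injective S K (by rw [h3, map_one])
  have h5 : f.toMatrix e = (T⁻¹).map (algebraMap S K) := by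
    have h6 : f.toMatrix e * e.toMatrix f = 1 := by
      rw [Basis.toMatrix_mul_toMatrix, Basis.toMatrix_self]
    have h7 : e.toMatrix f * (T⁻¹).map (algebraMap S K) = 1 := by
      rw [hT, ← Matrix.map_mul, Matrix.mul_nonsing_inv _ h4]
      simp
    calc f.toMatrix e = f.toMatrix e * (e.toMatrix f * (T⁻¹).map (algebraMap S K)) := by
          rw [h7, mul_one]
      _ = _ := by rw [← mul_assoc, h6, one_mul]
  refine Submodule.span_le.2 ?_
  rintro _ ⟨j, rfl⟩
  rw [SetLike.mem_coe, f.mem_span_iff_repr_mem S]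
  intro i
  rw [← Basis.toMatrix_apply, h5]
  exact ⟨_, rfl⟩

theorem polar_mem {φ : LinearMap.BilinForm K V} (hsym : ∀ x y, φ x y = φ y x)
    {N : Submodule S V} (hN : ∀ x ∈ N, φ x x ∈ (algebraMap S K).range) {x y : V}
    (hx : x ∈ N) (hy : y ∈ N) : 2 * φ x y ∈ (algebraMap S K).range := by
  have h1 := hN _ (add_mem hx hy)
  have h2 : 2 * φ x y = φ (x + y) (x + y) - φ x x - φ y y := by
    simp only [map_add, LinearMap.add_apply]
    rw [hsym y x]
    ring
  rw [h2]
  exact sub_mem (sub_mem h1 (hN _ hx)) (hN _ hy)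

theorem smul_mem_of_range {N : Submodule S V} {x : V} (hx : x ∈ N) {c : K}
    (hc : c ∈ (algebraMap S K).range) : c • x ∈ N := by
  obtain ⟨s, rfl⟩ := hc
  rw [algebraMap_smul]
  exact N.smul_mem _ hx

theorem key [ValuationRing S] {φ : LinearMap.BilinForm K V} (hsym : ∀ x y, φ x y = φ y x)
    (hB : LinearMap.BilinForm.Nondegenerate ((2 : K) • φ))
    (m n : Basis (Fin (finrank K V)) K V)
    (hM : ∀ x, (∀ y ∈ Submodule.span S (Set.range m), 2 * φ x y ∈ (algebraMap S K).range) →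
      φ x x ∈ (algebraMap S K).range → x ∈ Submodule.span S (Set.range m))
    (hN : ∀ x ∈ Submodule.span S (Set.range n), φ x x ∈ (algebraMap S K).range) :
    ∃ s : S, gram φ n = algebraMap S K s * gram φ m := by
  have hdual : dualLattice S K V φ (Submodule.span S (Set.range m)) =
      Submodule.span S (Set.range (LinearMap.BilinForm.dualBasis ((2 : K) • φ) hB m)) := by
    rw [dualLattice_eq, LinearMap.BilinForm.dualSubmodule_span_of_basis _ hB]
  set m' := LinearMap.BilinForm.dualBasis ((2 : K) • φ) hB m with hm'
  set M := Submodule.span S (Set.range m) with hMdef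
  set N := Submodule.span S (Set.range n) with hNdef
  set M' := Submodule.span S (Set.range m') with hMdef'
  obtain ⟨e, a, he, ha⟩ := exists_smith M' N (isLattice_span m') (isLattice_span n)
  have heM' : ∀ i, e i ∈ M' := fun i => he ▸ Submodule.subset_span ⟨i, rfl⟩
  have haN : ∀ i, (a i : K) • e i ∈ N := fun i => by
    rw [← ha]
    refine Submodule.subset_span ⟨i, ?_⟩
    rw [Basis.unitsSMul_apply, Units.smul_def]
  have hM'd : ∀ x ∈ M', ∀ y ∈ M, 2 * φ x y ∈ (algebraMap S K).range := by
    intro x hx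
    rw [← hdual] at hx
    exact hx
  have hlr : ∀ i, ∃ l r : K, l * r = a i ∧ l • e i ∈ M' ∧ l • e i ∈ N ∧ (r = 1 ∨ r = a i) := by
    intro i
    rcases ValuationRing.isInteger_or_isInteger S (a i : K) with h1 | h1
    · exact ⟨a i, 1, by simp, smul_mem_of_range (heM' i) h1, haN i, Or.inl rfl⟩
    · refine ⟨1, a i, by simp, by simpa using heM' i, ?_, Or.inr rfl⟩
      have := smul_mem_of_range (haN i) h1
      rwa [smul_smul, inv_mul_cancel₀ (a i).ne_zero] at this
  choose l r hlr hl1 hl2 hr using hlr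
  have hlM : ∀ i, l i • e i ∈ M := fun i => hM _ (hM'd _ (hl1 i)) (hN _ (hl2 i))
  have h_intg : ∀ i j, ∃ s : S, algebraMap S K s = 2 * φ (l i • e i) (r j • e j) := by
    intro i j
    rcases hr j with h1 | h1
    · have := hM'd _ (heM' j) _ (hlM i)
      rw [h1, one_smul, hsym]
      exact this
    · rw [h1]
      exact polar_mem hsym hN (hl2 i) (haN j)
  choose A hA using h_intg
  have hdetA : algebraMap S K (Matrix.of A).det = (∏ i, (a i : K)) * gram φ e := by
    rw [RingHom.map_det]
    have h1 : (algebraMap S K).mapMatrix (Matrix.of A) =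
        Matrix.of (fun i j => l i * (Matrix.of (fun i j => r j *
          LinearMap.BilinForm.toMatrix e ((2 : K) • φ) i j)) i j) := by
      ext i j
      simp [hA, LinearMap.BilinForm.toMatrix_apply]
      ring
    rw [h1, Matrix.det_mul_column, Matrix.det_mul_row, ← mul_assoc, ← Finset.prod_mul_distrib]
    simp only [hlr]
    rfl
  have h1 := gram_change φ (e.unitsSMul a) n
  obtain ⟨T, -, hT⟩ := det_mem (S := S) (e := e.unitsSMul a) (f := n) (by rw [ha])
  have h2 := gram_change φ e (e.unitsSMul a)
  rw [Basis.det_unitsSMul_self] at h2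
  have h3 := gram_change φ m' m
  rw [hm', dualBasis_det, ← hm'] at h3
  have h4 := gram_change φ e m'
  obtain ⟨U, -, hU⟩ := det_mem (S := S) (e := e) (f := m') (by rw [he])
  rw [hT] at h1
  rw [hU] at h4
  have hm0 := gram_ne_zero φ hB m
  have h5 : gram φ m * (algebraMap S K U.det ^ 2 * gram φ e) = 1 := by
    apply mul_left_cancel₀ hm0
    rw [← h4]
    linear_combination - h3
  refine ⟨(T.det * (Matrix.of A).det * U.det) ^ 2, ?_⟩
  simp only [map_pow, map_mul, hdetA]
  rw [h1, h2]
  linear_combination (- (algebraMap S K T.det) ^ 2 * (∏ i, (a i : K)) ^ 2 * gram φ e) * h5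
theorem gram_cons {φ : LinearMap.BilinForm K V} (hsym : ∀ x y, φ x y = φ y x) {h v : V}
    {q c : K} (hq : q ≠ 0) (hh : φ h h = q) (hv : φ h v = c)
    {W : Submodule K V} (hW : ∀ x ∈ W, φ h x = 0) {k : ℕ} (n : Basis (Fin k) K W)
    (E E' : Basis (Fin (k + 1)) K V) (hE : (E : Fin (k + 1) → V) = Fin.cons v (W.subtype ∘ n))
    (hE' : (E' : Fin (k + 1) → V) = Fin.cons h (W.subtype ∘ n)) :
    gram φ E * q = 2 * c ^ 2 * gram (φ.restrict W) n := by
  have hE0 : E' 0 = h := by rw [hE']; rfl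
  have hEs : ∀ i : Fin k, E' i.succ = n i := fun i => by rw [hE']; rfl
  have hE0' : E 0 = v := by rw [hE]; rfl
  have hEs' : ∀ i : Fin k, E i.succ = n i := fun i => by rw [hE]; rfl
  have h1 : gram φ E' = 2 * q * gram (φ.restrict W) n := by
    unfold gram
    rw [Matrix.det_succ_row_zero, Fin.sum_univ_succ]
    rw [Finset.sum_eq_zero]
    · rw [LinearMap.BilinForm.toMatrix_apply]
      simp only [hE0, LinearMap.smul_apply, hh]
      have : (LinearMap.BilinForm.toMatrix E' ((2 : K) • φ)).submatrix Fin.succ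
          (Fin.succAbove 0) = LinearMap.BilinForm.toMatrix n ((2 : K) • φ.restrict W) := by
        ext i j
        simp [LinearMap.BilinForm.toMatrix_apply, hEs]
      rw [this]
      simp
    · intro i _
      rw [LinearMap.BilinForm.toMatrix_apply, hE0, hEs]
      simp [hW]
  have h2 : E'.det E * q = c := by
    have h3 : E'.det E = E'.repr v 0 := by
      rw [Basis.det_apply, Matrix.det_succ_row_zero, Fin.sum_univ_succ, Finset.sum_eq_zero]
      · have : (E'.toMatrix E).submatrix Fin.succ (Fin.succAbove 0) = 1 := by
          ext i j
          simp only [Matrix.submatrix_apply, Fin.succAbove_zero, Basis.toMatrix_apply, hEs']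
          rw [← hEs, Basis.repr_self, Finsupp.single_apply, Matrix.one_apply]
          simp [eq_comm]
        rw [this, Basis.toMatrix_apply, hE0']
        simp
      · intro i _
        rw [Basis.toMatrix_apply, hEs', ← hEs, Basis.repr_self]
        simp
    rw [h3, ← hv]
    conv_rhs => rw [← E'.sum_repr v]
    rw [Fin.sum_univ_succ, map_add, map_sum, Finset.sum_eq_zero]
    · simp [hE0, hh]
    · intro i _
      rw [map_smul, hEs, hW _ (n i).2, smul_zero]
  rw [gram_change φ E' E, h1, ← h2]
  ring

/-- If `X` spans `V`, any vector has a nonzero multiple in `X`. -/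
theorem exists_smul_mem {R : Type*} [CommRing R] [IsDomain R] [Algebra R K] [IsFractionRing R K]
    [Module R V] [IsScalarTower R K V] {X : Submodule R V}
    (hX : Submodule.span K (X : Set V) = ⊤) (v : V) : ∃ s : R, s ≠ 0 ∧ s • v ∈ X := by
  have hv : v ∈ Submodule.span K (X : Set V) := hX ▸ Submodule.mem_top
  induction hv using Submodule.span_induction with
  | mem x hx => exact ⟨1, one_ne_zero, by simpa using hx⟩
  | zero => exact ⟨1, one_ne_zero, by simp⟩
  | add x y _ _ hx hy =>
    obtain ⟨s, hs, hs'⟩ := hx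
    obtain ⟨t, ht, ht'⟩ := hy
    refine ⟨s * t, mul_ne_zero hs ht, ?_⟩
    rw [smul_add]
    refine add_mem ?_ ?_
    · rw [mul_comm, mul_smul]; exact X.smul_mem _ hs'
    · rw [mul_smul]; exact X.smul_mem _ ht'
  | smul a x _ hx =>
    obtain ⟨s, hs, hs'⟩ := hx
    obtain ⟨u, w, hw, rfl⟩ := IsFractionRing.div_surjective R a
    have hw0 : w ≠ 0 := nonZeroDivisors.ne_zero hw
    have hw1 : algebraMap R K w ≠ 0 := IsFractionRing.to_map_ne_zero_of_mem_nonZeroDivisors hw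
    refine ⟨s * w, mul_ne_zero hs hw0, ?_⟩
    have : (s * w) • (algebraMap R K u / algebraMap R K w) • x = u • s • x := by
      rw [← algebraMap_smul K (s * w), ← algebraMap_smul K u, ← algebraMap_smul K s x, smul_smul,
        smul_smul]
      congr 1
      rw [map_mul]
      field_simp
    rw [this]
    exact X.smul_mem _ hs'

/-- Intersection with a subspace is a lattice. -/
theorem isLattice_comap {R : Type*} [CommRing R] [IsDomain R] [IsNoetherianRing R] [Algebra R K]
    [IsFractionRing R K] [Module R V] [IsScalarTower R K V] {L : Submodule R V}
    (hL : IsLattice R K V L) (W : Submodule K V) (N : Submodule R W)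
    (hN : ∀ x : W, x ∈ N ↔ (x : V) ∈ L) : IsLattice R K W N := by
  constructor
  · haveI : Module.Finite R L := Module.Finite.iff_fg.2 hL.1
    haveI : IsNoetherian R L := isNoetherian_of_isNoetherianRing_of_finite R L
    have hle : N.map (W.subtype.restrictScalars R) ≤ L := by
      rintro _ ⟨x, hx, rfl⟩
      exact (hN x).1 hx
    have : (N.map (W.subtype.restrictScalars R)).FG := by
      rw [← Module.Finite.iff_fg]
      haveI := isNoetherian_of_le hle
      infer_instance
    exact Submodule.fg_of_fg_map_injective (W.subtype.restrictScalars R)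
      Subtype.val_injective this
  · rw [eq_top_iff]
    intro w _
    obtain ⟨s, hs, hs'⟩ := exists_smul_mem (R := R) hL.2 (w : V)
    have h1 : s • w ∈ N := (hN _).2 (by simpa using hs')
    have h2 : algebraMap R K s ≠ 0 := by simpa using hs
    have : w = (algebraMap R K s)⁻¹ • (s • w) := by
      rw [← algebraMap_smul K s w, smul_smul, inv_mul_cancel₀ h2, one_smul]
    rw [this]
    exact Submodule.smul_mem _ _ (Submodule.subset_span h1)

theorem local_identity {φ : LinearMap.BilinForm K V} (hsym : ∀ x y, φ x y = φ y x)
    (hB : LinearMap.BilinForm.Nondegenerate ((2 : K) • φ)) {h : V} {q : K} (hq : q ≠ 0)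
    (hh : φ h h = q) {W : Submodule K V} (hW : ∀ x, x ∈ W ↔ φ h x = 0)
    (hBW : LinearMap.BilinForm.Nondegenerate ((2 : K) • φ.restrict W))
    {L : Submodule S V} (hL : IsLattice S K V L) {N : Submodule S W}
    (hN : ∀ x : W, x ∈ N ↔ (x : V) ∈ L) :
    Submodule.span S {2 * q} * latticeIndex S K V (dualLattice S K V φ L) L =
      latticeIndex S K W (dualLattice S K W (φ.restrict W) N) N *
        (Submodule.span S {(2 : K)} * Submodule.span S ((fun x => φ h x) '' (L : Set V))) ^ 2 := by
  have hNl := isLattice_comap hL W N hN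
  obtain ⟨n, hn⟩ := exists_basis N hNl
  -- the ideal `φ(h, L)` is principal
  let fh : V →ₗ[S] K := (φ h).restrictScalars S
  let J : Submodule S K := L.map fh
  have hJ : Submodule.span S ((fun x => φ h x) '' (L : Set V)) = J := by
    change Submodule.span S (fh '' (L : Set V)) = J
    rw [← Submodule.map_span, Submodule.span_eq]
  have hJl : IsLattice S K K J := by
    refine ⟨hL.1.map _, ?_⟩
    rw [eq_top_iff]
    intro x _
    obtain ⟨s, hs, hs'⟩ := exists_smul_mem (R := S) hL.2 h
    have h2 : algebraMap S K s ≠ 0 := by simpa using hs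
    have h3 : algebraMap S K s * q ∈ J := ⟨_, hs', by
      simp only [fh, LinearMap.restrictScalars_apply]
      rw [← algebraMap_smul K s h, map_smul, hh, smul_eq_mul]⟩
    have : x = (x / (algebraMap S K s * q)) • (algebraMap S K s * q) := by
      rw [smul_eq_mul]; field_simp
    rw [this]
    exact Submodule.smul_mem _ _ (Submodule.subset_span h3)
  obtain ⟨c, hc0, hcJ⟩ : ∃ c : K, c ≠ 0 ∧ Submodule.span S {c} = J := by
    obtain ⟨g, hg⟩ := exists_basis J hJl
    have i0 : Fin (finrank K K) := ⟨0, by simp⟩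
    refine ⟨g i0, g.ne_zero i0, ?_⟩
    rw [← hg]
    congr 1
    ext y
    have hsub : ∀ i : Fin (finrank K K), i = i0 := by
      intro i
      have h1 : (i : ℕ) < 1 := lt_of_lt_of_eq i.2 (Module.finrank_self K)
      have h2 : (i0 : ℕ) < 1 := lt_of_lt_of_eq i0.2 (Module.finrank_self K)
      ext; omega
    constructor
    · rintro rfl; exact ⟨i0, rfl⟩
    · rintro ⟨i, rfl⟩; rw [hsub i]; rfl
  have hcmem : c ∈ J := hcJ ▸ Submodule.mem_span_singleton_self c
  obtain ⟨v, hvL, hv⟩ := hcmem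
  replace hv : φ h v = c := hv
  have hW0 : ∀ x ∈ W, φ h x = 0 := fun x hx => (hW x).1 hx
  have mk : ∀ u : V, φ h u ≠ 0 → ∃ E : Basis (Fin (finrank K W + 1)) K V,
      (E : Fin (finrank K W + 1) → V) = Fin.cons u (W.subtype ∘ n) := by
    intro u hu
    refine ⟨Basis.mkFinCons u n ?_ ?_, Basis.coe_mkFinCons _ _ _ _⟩
    · intro b x hx hbx
      have := congrArg (φ h) hbx
      rw [map_add, map_smul, hW0 x hx, map_zero, add_zero, smul_eq_mul] at this
      exact (mul_eq_zero.1 this).resolve_right hu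
    · intro z
      refine ⟨- (φ h z / φ h u), ?_⟩
      rw [hW, map_add, map_smul, smul_eq_mul]
      field_simp
      ring
  obtain ⟨E, hE⟩ := mk v (by rw [hv]; exact hc0)
  obtain ⟨E', hE'⟩ := mk h (by rw [hh]; exact hq)
  have hspan : Submodule.span S (Set.range E) = L := by
    apply le_antisymm
    · refine Submodule.span_le.2 ?_
      rintro _ ⟨i, rfl⟩
      rw [hE]
      refine Fin.cases ?_ (fun j => ?_) i
      · exact hvL
      · simp only [Fin.cons_succ]
        exact (hN _).1 (hn ▸ Submodule.subset_span ⟨j, rfl⟩)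
    · intro x hx
      have h1 : φ h x ∈ Submodule.span S {c} := hcJ ▸ ⟨x, hx, rfl⟩
      obtain ⟨s, hs⟩ := Submodule.mem_span_singleton.1 h1
      have h2 : x - s • v ∈ W := by
        rw [hW, map_sub, ← algebraMap_smul K s v, map_smul, hv, algebraMap_smul, hs, sub_self]
      have h3 : (⟨x - s • v, h2⟩ : W) ∈ N := (hN _).2 (sub_mem hx (L.smul_mem _ hvL))
      rw [← hn] at h3
      have h4 : x - s • v ∈ Submodule.span S (Set.range E) := by
        have h5 : x - s • v ∈ (Submodule.span S (Set.range n)).map (W.subtype.restrictScalars S) :=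
          ⟨_, h3, rfl⟩
        rw [Submodule.map_span, ← Set.range_comp] at h5
        refine Submodule.span_mono ?_ h5
        rintro _ ⟨j, rfl⟩
        exact ⟨j.succ, by rw [hE]; rfl⟩
      have h6 : v ∈ Submodule.span S (Set.range E) :=
        Submodule.subset_span ⟨0, by rw [hE]; rfl⟩
      have := add_mem h4 (Submodule.smul_mem _ s h6)
      simpa using this
  have hgram := gram_cons hsym hq hh hv hW0 n E E' hE hE'
  rw [hJ, ← hcJ, ← hspan, disc_eq φ hB, ← hn, disc_eq (φ.restrict W) hBW]
  simp only [Submodule.span_mul_span, Set.singleton_mul_singleton, pow_two]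
  congr 2
  linear_combination 2 * hgram

end Local

section Glue

set_option linter.unusedSectionVars false
set_option linter.style.haveILetI false
set_option linter.unusedVariables false

variable {o : Type*} [CommRing o] [IsDomain o] {K : Type*} [Field K] [Algebra o K]
  [IsFractionRing o K]
variable {V : Type*} [AddCommGroup V] [Module K V] [Module o V] [IsScalarTower o K V]
variable {V' : Type*} [AddCommGroup V'] [Module K V'] [Module o V'] [IsScalarTower o K V']

theorem le_of_locally {X Y : Submodule o V}
    (h : ∀ p : Ideal o, p.IsMaximal → ∀ x ∈ X, ∃ s : o, s ∉ p ∧ s • x ∈ Y) : X ≤ Y := by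
  intro x hx
  let I : Ideal o := Y.comap (LinearMap.toSpanSingleton o V x)
  have hI : I = ⊤ := by
    by_contra hne
    obtain ⟨p, hp, hIp⟩ := Ideal.exists_le_maximal I hne
    obtain ⟨s, hs, hsx⟩ := h p hp x hx
    exact hs (hIp (by simpa [I] using hsx))
  have : (1 : o) ∈ I := hI ▸ Submodule.mem_top
  simpa [I] using this

variable (p : Ideal o) [hp : p.IsPrime]

theorem uniform {X : Submodule o V} (hX : X.FG) (f : V →ₗ[o] V') {Y : Submodule o V'}
    (h : ∀ x ∈ X, ∃ s : o, s ∉ p ∧ s • f x ∈ Y) : ∃ s : o, s ∉ p ∧ ∀ x ∈ X, s • f x ∈ Y := by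
  obtain ⟨t, rfl⟩ := hX
  have h1 : ∀ u : Finset V, u ⊆ t → ∃ s : o, s ∉ p ∧ ∀ x ∈ u, s • f x ∈ Y := by
    classical
    intro u
    induction u using Finset.induction with
    | empty => exact fun _ => ⟨1, fun h1 => hp.ne_top ((Ideal.eq_top_iff_one p).2 h1), by simp⟩
    | insert a u _ ih =>
      intro hu
      obtain ⟨s, hs, hs'⟩ := ih (fun x hx => hu (Finset.mem_insert_of_mem hx))
      obtain ⟨r, hr, hr'⟩ := h a (Submodule.subset_span (hu (Finset.mem_insert_self a u)))
      refine ⟨r * s, fun hrs => (hp.mem_or_mem hrs).elim hr hs, ?_⟩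
      intro x hx
      rcases Finset.mem_insert.1 hx with rfl | hx
      · rw [mul_comm, mul_smul]; exact Y.smul_mem _ hr'
      · rw [mul_smul]; exact Y.smul_mem _ (hs' x hx)
  obtain ⟨s, hs, hs'⟩ := h1 t subset_rfl
  refine ⟨s, hs, ?_⟩
  intro x hx
  induction hx using Submodule.span_induction with
  | mem x hx => exact hs' x hx
  | zero => simp
  | add x y _ _ hx hy => rw [map_add, smul_add]; exact add_mem hx hy
  | smul a x _ hx => rw [map_smul, smul_comm]; exact Y.smul_mem _ hx

variable (S : Type*) [CommRing S] [Algebra o S] [IsLocalization.AtPrime S p]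
  [Algebra S K] [IsScalarTower o S K] [Module S V] [IsScalarTower S K V]
  [Module S V'] [IsScalarTower S K V']

include K in
theorem tower : IsScalarTower o S V := by
  constructor
  intro a s v
  rw [← algebraMap_smul K (a • s) v, ← algebraMap_smul K s v, ← algebraMap_smul K a (_ • v),
    smul_smul, Algebra.smul_def, map_mul, ← IsScalarTower.algebraMap_apply]

include p K in
theorem mem_loc {X : Submodule o V} {x : V} :
    x ∈ Submodule.span S (X : Set V) ↔ ∃ s : o, s ∉ p ∧ s • x ∈ X := by
  haveI : IsScalarTower o S V := tower (K := K) S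
  constructor
  · intro hx
    induction hx using Submodule.span_induction with
    | mem x hx => exact ⟨1, fun h1 => hp.ne_top ((Ideal.eq_top_iff_one p).2 h1), by simpa using hx⟩
    | zero => exact ⟨1, fun h1 => hp.ne_top ((Ideal.eq_top_iff_one p).2 h1), by simp⟩
    | add x y _ _ hx hy =>
      obtain ⟨s, hs, hs'⟩ := hx
      obtain ⟨t, ht, ht'⟩ := hy
      refine ⟨s * t, fun hrs => (hp.mem_or_mem hrs).elim hs ht, ?_⟩
      rw [smul_add]
      refine add_mem ?_ ?_
      · rw [mul_comm, mul_smul]; exact X.smul_mem _ hs'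
      · rw [mul_smul]; exact X.smul_mem _ ht'
    | smul c x _ hx =>
      obtain ⟨s, hs, hs'⟩ := hx
      obtain ⟨a, t, rfl⟩ := IsLocalization.exists_mk'_eq p.primeCompl c
      refine ⟨s * t, fun hrs => (hp.mem_or_mem hrs).elim hs t.2, ?_⟩
      have : (s * (t : o)) • IsLocalization.mk' S a t • x = a • s • x := by
        rw [← smul_assoc, mul_smul, Algebra.smul_def (t : o), mul_comm (algebraMap o S _),
          IsLocalization.mk'_spec, smul_assoc, algebraMap_smul, smul_comm]
      rw [this]
      exact X.smul_mem _ hs'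
  · rintro ⟨s, hs, hs'⟩
    obtain ⟨u, hu⟩ := IsLocalization.map_units S (⟨s, hs⟩ : p.primeCompl)
    have hu' : (u : S) = algebraMap o S s := hu
    have : x = ((u⁻¹ : Sˣ) : S) • (s • x) := by
      rw [← algebraMap_smul S s x, ← hu', smul_smul]
      simp
    rw [this]
    exact Submodule.smul_mem _ _ (Submodule.subset_span hs')

include p in
theorem mem_range_loc {c : K} :
    c ∈ (algebraMap S K).range ↔ ∃ s : o, s ∉ p ∧ algebraMap o K s * c ∈ (algebraMap o K).range := by
  constructor
  · rintro ⟨c, rfl⟩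
    obtain ⟨a, t, rfl⟩ := IsLocalization.exists_mk'_eq p.primeCompl c
    refine ⟨t, t.2, a, ?_⟩
    rw [IsScalarTower.algebraMap_apply o S K, IsScalarTower.algebraMap_apply o S K, ← map_mul,
      mul_comm (algebraMap o S _), IsLocalization.mk'_spec]
  · rintro ⟨s, hs, a, ha⟩
    have hs0 : algebraMap o K s ≠ 0 := by
      intro h0
      have : s = 0 := by simpa using h0
      exact hs (this ▸ p.zero_mem)
    refine ⟨IsLocalization.mk' S a (⟨s, hs⟩ : p.primeCompl), ?_⟩
    apply mul_left_cancel₀ hs0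
    rw [← ha, IsScalarTower.algebraMap_apply o S K, IsScalarTower.algebraMap_apply o S K, ← map_mul]
    rw [IsLocalization.mk'_spec' S a (⟨s, hs⟩ : p.primeCompl)]

include p K in
theorem loc_lattice {X : Submodule o V} (hX : IsLattice o K V X) :
    IsLattice S K V (Submodule.span S (X : Set V)) := by
  haveI : IsScalarTower o S V := tower (K := K) S
  refine ⟨?_, ?_⟩
  · obtain ⟨t, ht⟩ := hX.1
    rw [← ht, Submodule.span_span_of_tower]
    exact ⟨t, rfl⟩
  · rw [Submodule.span_span_of_tower, hX.2]

theorem smul_eq' (s : o) (x : V) : s • x = algebraMap o K s • x := (algebraMap_smul K s x).symm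

include p in
theorem dual_loc (φ : LinearMap.BilinForm K V) {X : Submodule o V} (hX : X.FG) :
    dualLattice S K V φ (Submodule.span S (X : Set V)) =
      Submodule.span S (dualLattice o K V φ X : Set V) := by
  ext x
  rw [mem_loc (K := K) p S]
  constructor
  · intro hx
    have h1 : ∀ y ∈ X, ∃ s : o, s ∉ p ∧
        s • (((2 : K) • φ x).restrictScalars o) y ∈ (1 : Submodule o K) := by
      intro y hy
      obtain ⟨s, hs, a, ha⟩ := (mem_range_loc p S).1 (hx y (Submodule.subset_span hy))
      refine ⟨s, hs, Submodule.mem_one.2 ⟨a, ?_⟩⟩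
      simp [ha, Algebra.smul_def]
    obtain ⟨s, hs, hs'⟩ := uniform p hX _ h1
    refine ⟨s, hs, ?_⟩
    intro y hy
    obtain ⟨a, ha⟩ := Submodule.mem_one.1 (hs' y hy)
    refine ⟨a, ?_⟩
    rw [ha, smul_eq' (K := K) s x, map_smul]
    simp [Algebra.smul_def]
    ring
  · rintro ⟨s, hs, hs'⟩ y hy
    obtain ⟨t, ht, ht'⟩ := (mem_loc (K := K) p S).1 hy
    refine (mem_range_loc p S).2 ⟨s * t, fun h => (hp.mem_or_mem h).elim hs ht, ?_⟩
    have := hs' _ ht'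
    rw [smul_eq' (K := K) s x, smul_eq' (K := K) t y, map_smul, map_smul, LinearMap.smul_apply,
      smul_eq_mul, smul_eq_mul] at this
    rw [map_mul]
    convert this using 1
    ring

include p in
theorem index_loc [FiniteDimensional K V] {X Y : Submodule o V} (hX : X.FG) :
    latticeIndex S K V (Submodule.span S (X : Set V)) (Submodule.span S (Y : Set V)) =
      Submodule.span S (latticeIndex o K V X Y : Set K) := by
  apply le_antisymm
  · refine Submodule.span_le.2 ?_
    rintro c ⟨α, rfl, hα⟩
    rw [SetLike.mem_coe, mem_loc (K := K) p S]
    have h1 : ∀ x ∈ X, ∃ s : o, s ∉ p ∧ s • ((α : V →ₗ[K] V).restrictScalars o) x ∈ Y := by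
      intro x hx
      exact (mem_loc (K := K) p S).1 (hα x (Submodule.subset_span hx))
    obtain ⟨s, hs, hs'⟩ := uniform p hX _ h1
    have hs0 : algebraMap o K s ≠ 0 := by
      intro h0
      have : s = 0 := by simpa using h0
      exact hs (this ▸ p.zero_mem)
    refine ⟨s ^ finrank K V, fun h => hs (hp.mem_of_pow_mem _ h), ?_⟩
    refine Submodule.subset_span ⟨α.trans (LinearEquiv.smulOfNeZero K V _ hs0), ?_, ?_⟩
    · have : ((α.trans (LinearEquiv.smulOfNeZero K V _ hs0) : V ≃ₗ[K] V) : V →ₗ[K] V) =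
        algebraMap o K s • (α : V →ₗ[K] V) := by
        ext x
        simp
      rw [this, LinearMap.det_smul, Algebra.smul_def, map_pow]
    · intro x hx
      have := hs' x hx
      rw [smul_eq' (K := K) s] at this
      simpa using this
  · rw [latticeIndex.eq_def o, Submodule.span_span_of_tower]
    refine Submodule.span_le.2 ?_
    rintro c ⟨α, rfl, hα⟩
    refine Submodule.subset_span ⟨α, rfl, ?_⟩
    intro x hx
    obtain ⟨s, hs, hs'⟩ := (mem_loc (K := K) p S).1 hx
    refine (mem_loc (K := K) p S).2 ⟨s, hs, ?_⟩
    have := hα _ hs'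
    rwa [smul_eq' (K := K) s, map_smul, ← smul_eq' (K := K) s] at this

include p in
theorem int_loc (φ : LinearMap.BilinForm K V) {N : Submodule o V}
    (hN : ∀ x ∈ N, φ x x ∈ (algebraMap o K).range) :
    ∀ x ∈ Submodule.span S (N : Set V), φ x x ∈ (algebraMap S K).range := by
  intro x hx
  obtain ⟨s, hs, hs'⟩ := (mem_loc (K := K) p S).1 hx
  refine (mem_range_loc p S).2 ⟨s * s, fun h => (hp.mem_or_mem h).elim hs hs, ?_⟩
  have := hN _ hs'
  rw [smul_eq' (K := K) s, map_smul, map_smul, LinearMap.smul_apply, smul_eq_mul, smul_eq_mul] at this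
  rwa [map_mul, mul_assoc]

/-- The saturation property of maximal lattices. -/
def Sat (R : Type*) [CommRing R] [Algebra R K] [Module R V]
    (φ : LinearMap.BilinForm K V) (M : Submodule R V) : Prop :=
  ∀ x, (∀ y ∈ M, 2 * φ x y ∈ (algebraMap R K).range) → φ x x ∈ (algebraMap R K).range → x ∈ M

include p in
theorem sat_loc (φ : LinearMap.BilinForm K V) {M : Submodule o V} (hM : M.FG) (hs : Sat o φ M) :
    Sat S φ (Submodule.span S (M : Set V)) := by
  intro x hx hxx
  have h1 : x ∈ dualLattice S K V φ (Submodule.span S (M : Set V)) := hx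
  rw [dual_loc p S φ hM, mem_loc (K := K) p S] at h1
  obtain ⟨s, hs0, hs1⟩ := h1
  obtain ⟨t, ht0, a, ha⟩ := (mem_range_loc p S).1 hxx
  rw [mem_loc (K := K) p S]
  refine ⟨t * s, fun h => (hp.mem_or_mem h).elim ht0 hs0, hs _ ?_ ?_⟩
  · have := (dualLattice o K V φ M).smul_mem t hs1
    rw [smul_smul] at this
    exact this
  · refine ⟨s * s * t * a, ?_⟩
    rw [smul_eq' (K := K) _ x, map_smul, map_smul, LinearMap.smul_apply, smul_eq_mul, smul_eq_mul]
    simp only [map_mul]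
    rw [ha]
    ring

theorem sat_of_maximal {φ : LinearMap.BilinForm K V} (hsym : ∀ x y, φ x y = φ y x)
    {M : Submodule o V} (hM : IsMaximalLattice o K V φ M) : Sat o φ M := by
  intro x hx hxx
  have h1 : M ⊔ Submodule.span o {x} = M := by
    refine hM.2.2 _ ⟨?_, ?_⟩ ?_ le_sup_left
    · exact hM.1.1.sup (Submodule.fg_span_singleton x)
    · rw [eq_top_iff, ← hM.1.2]
      exact Submodule.span_mono (le_sup_left : M ≤ _)
    · intro z hz
      obtain ⟨m, hm, y, hy, rfl⟩ := Submodule.mem_sup.1 hz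
      obtain ⟨a, rfl⟩ := Submodule.mem_span_singleton.1 hy
      obtain ⟨u, hu⟩ := hM.2.1 m hm
      obtain ⟨v, hv⟩ := hx m hm
      obtain ⟨w, hw⟩ := hxx
      refine ⟨u + a * v + a * a * w, ?_⟩
      simp only [map_add, map_mul, hu, hv, hw, smul_eq' (K := K) a, map_smul, LinearMap.add_apply,
        LinearMap.smul_apply, smul_eq_mul]
      rw [hsym m x]
      ring
  rw [← h1]
  exact Submodule.mem_sup_right (Submodule.mem_span_singleton_self x)

theorem loc_mul (I J : Submodule o K) :
    Submodule.span S ((I * J : Submodule o K) : Set K) =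
      Submodule.span S (I : Set K) * Submodule.span S (J : Set K) := by
  rw [Submodule.span_mul_span, Submodule.mul_eq_span_mul_set, Submodule.span_span_of_tower]

end Glue

section Global

variable {o : Type*} [CommRing o] [IsDedekindDomain o] {K : Type*} [Field K] [Algebra o K]
  [IsFractionRing o K] (hof : ¬ IsField o)
variable {V : Type*} [AddCommGroup V] [Module K V] [Module o V] [IsScalarTower o K V]

/-- The local ring at `p` as a subalgebra of the fraction field. -/
noncomputable abbrev Sp (K : Type*) [Field K] [Algebra o K] [IsFractionRing o K]
    (p : Ideal o) [p.IsPrime] : Subalgebra o K :=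
  Localization.subalgebra.ofField K p.primeCompl p.primeCompl_le_nonZeroDivisors

include hof in
theorem sp_dvr (p : Ideal o) [hp : p.IsMaximal] : IsDiscreteValuationRing (Sp K p) :=
  IsLocalization.AtPrime.isDiscreteValuationRing_of_dedekind_domain o
    (Ring.ne_bot_of_isMaximal_of_not_isField hp hof) _

theorem le_of_loc {X Y : Submodule o V}
    (h : ∀ (p : Ideal o) [p.IsMaximal],
      Submodule.span (Sp K p) (X : Set V) ≤ Submodule.span (Sp K p) (Y : Set V)) : X ≤ Y := by
  refine le_of_locally fun p hp x hx => ?_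
  exact (mem_loc (K := K) p (Sp K p)).1 (h p (Submodule.subset_span hx))

theorem eq_of_loc {X Y : Submodule o V}
    (h : ∀ (p : Ideal o) [p.IsMaximal],
      Submodule.span (Sp K p) (X : Set V) = Submodule.span (Sp K p) (Y : Set V)) : X = Y :=
  le_antisymm (le_of_loc (K := K) fun p _ => (h p).le) (le_of_loc (K := K) fun p _ => (h p).ge)

variable [FiniteDimensional K V]

/-- dual lattices are finitely generated -/
theorem dual_fg {φ : LinearMap.BilinForm K V}
    (hB : LinearMap.BilinForm.Nondegenerate ((2 : K) • φ)) {X : Submodule o V}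
    (hX : IsLattice o K V X) : (dualLattice o K V φ X).FG := by
  classical
  obtain ⟨b, hb⟩ : ∃ b : Basis (Fin (finrank K V)) K V, ∀ i, b i ∈ X := by
    let b := Module.finBasis K V
    choose s hs hs' using fun i => exists_smul_mem (R := o) hX.2 (b i)
    have h0 : ∀ i, algebraMap o K (s i) ≠ 0 := fun i => by simpa using hs i
    refine ⟨b.unitsSMul (fun i => Units.mk0 _ (h0 i)), fun i => ?_⟩
    rw [Basis.unitsSMul_apply, Units.smul_def, Units.val_mk0, algebraMap_smul]
    exact hs' i
  have hle : dualLattice o K V φ X ≤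
      Submodule.span o (Set.range (LinearMap.BilinForm.dualBasis ((2 : K) • φ) hB b)) := by
    rw [← LinearMap.BilinForm.dualSubmodule_span_of_basis, ← dualLattice_eq]
    intro x hx y hy
    refine hx y (Submodule.span_le.2 ?_ hy)
    rintro _ ⟨i, rfl⟩
    exact hb i
  haveI : Module.Finite o (Submodule.span o
      (Set.range (LinearMap.BilinForm.dualBasis ((2 : K) • φ) hB b))) :=
    Module.Finite.iff_fg.2 (Submodule.fg_span (Set.finite_range _))
  haveI := isNoetherian_of_isNoetherianRing_of_finite o (Submodule.span o
      (Set.range (LinearMap.BilinForm.dualBasis ((2 : K) • φ) hB b)))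
  rw [← Module.Finite.iff_fg]
  haveI := isNoetherian_of_le hle
  infer_instance

/-- localization of the discriminant ideal -/
theorem disc_loc {φ : LinearMap.BilinForm K V}
    (hB : LinearMap.BilinForm.Nondegenerate ((2 : K) • φ)) {X : Submodule o V}
    (hX : IsLattice o K V X) (p : Ideal o) [p.IsPrime] :
    Submodule.span (Sp K p) (latticeIndex o K V (dualLattice o K V φ X) X : Set K) =
      latticeIndex (Sp K p) K V (dualLattice (Sp K p) K V φ (Submodule.span (Sp K p) (X : Set V)))
        (Submodule.span (Sp K p) (X : Set V)) := by
  rw [dual_loc p (Sp K p) φ hX.1, index_loc p (Sp K p) (dual_fg hB hX)]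

include hof in
theorem global_identity {φ : LinearMap.BilinForm K V} (hsym : ∀ x y, φ x y = φ y x)
    (hB : LinearMap.BilinForm.Nondegenerate ((2 : K) • φ)) {h : V} {q : K} (hq : q ≠ 0)
    (hh : φ h h = q) {W : Submodule K V} (hW : ∀ x, x ∈ W ↔ φ h x = 0)
    (hBW : LinearMap.BilinForm.Nondegenerate ((2 : K) • φ.restrict W))
    {L : Submodule o V} (hL : IsLattice o K V L) {N : Submodule o W}
    (hN : ∀ x : W, x ∈ N ↔ (x : V) ∈ L) :
    Submodule.span o {2 * q} * latticeIndex o K V (dualLattice o K V φ L) L =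
      latticeIndex o K W (dualLattice o K W (φ.restrict W) N) N *
        (Submodule.span o {(2 : K)} * Submodule.span o ((fun x => φ h x) '' (L : Set V))) ^ 2 := by
  have hNl := isLattice_comap hL W N hN
  refine eq_of_loc (K := K) fun p hp => ?_
  haveI := sp_dvr (K := K) hof p
  have hN' : ∀ x : W, x ∈ Submodule.span (Sp K p) (N : Set W) ↔
      (x : V) ∈ Submodule.span (Sp K p) (L : Set V) := by
    intro x
    rw [mem_loc (K := K) p (Sp K p), mem_loc (K := K) p (Sp K p)]
    simp only [hN, Submodule.coe_smul_of_tower]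
  have := local_identity hsym hB hq hh hW hBW (loc_lattice p (Sp K p) hL) hN'
  rw [pow_two] at this ⊢
  rw [loc_mul, loc_mul, loc_mul, loc_mul, disc_loc hB hL, disc_loc hBW hNl,
    Submodule.span_span_of_tower, Submodule.span_span_of_tower, Submodule.span_span_of_tower, this]
  have h2 : Submodule.span (Sp K p) ((fun x => φ h x) '' (Submodule.span (Sp K p) (L : Set V) : Set V))
      = Submodule.span (Sp K p) ((fun x => φ h x) '' (L : Set V)) := by
    let fh : V →ₗ[Sp K p] K := (φ h).restrictScalars (Sp K p)
    change Submodule.span (Sp K p) (fh '' _) = Submodule.span (Sp K p) (fh '' _)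
    rw [← Submodule.map_span, ← Submodule.map_span, Submodule.span_span]
  rw [h2]

include hof in
theorem disc_le {φ : LinearMap.BilinForm K V} (hsym : ∀ x y, φ x y = φ y x)
    (hB : LinearMap.BilinForm.Nondegenerate ((2 : K) • φ)) {M N : Submodule o V}
    (hM : IsMaximalLattice o K V φ M) (hN : IsLattice o K V N)
    (hNi : ∀ x ∈ N, φ x x ∈ (algebraMap o K).range) :
    latticeIndex o K V (dualLattice o K V φ N) N ≤
      latticeIndex o K V (dualLattice o K V φ M) M := by
  refine le_of_loc (K := K) fun p hp => ?_
  haveI := sp_dvr (K := K) hof p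
  obtain ⟨m, hm⟩ := exists_basis _ (loc_lattice p (Sp K p) hM.1)
  obtain ⟨n, hn⟩ := exists_basis _ (loc_lattice p (Sp K p) hN)
  rw [disc_loc hB hN, disc_loc hB hM.1, ← hm, ← hn, disc_eq φ hB, disc_eq φ hB]
  have h1 := sat_loc p (Sp K p) φ hM.1.1 (sat_of_maximal hsym hM)
  have h2 := int_loc p (Sp K p) φ hNi
  rw [← hm] at h1
  rw [← hn] at h2
  obtain ⟨s, hs⟩ := key hsym hB m n h1 h2
  rw [Submodule.span_singleton_le_iff_mem, hs, ← Algebra.smul_def]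
  exact Submodule.smul_mem _ _ (Submodule.mem_span_singleton_self _)

include hof in
theorem le_of_disc_le {φ : LinearMap.BilinForm K V}
    (hB : LinearMap.BilinForm.Nondegenerate ((2 : K) • φ)) {L N : Submodule o V}
    (hL : IsLattice o K V L) (hN : IsLattice o K V N) (hNL : N ≤ L)
    (hd : latticeIndex o K V (dualLattice o K V φ L) L ≤
      latticeIndex o K V (dualLattice o K V φ N) N) : L ≤ N := by
  refine le_of_loc (K := K) fun p hp => ?_
  haveI := sp_dvr (K := K) hof p
  obtain ⟨l, hl⟩ := exists_basis _ (loc_lattice p (Sp K p) hL)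
  obtain ⟨n, hn⟩ := exists_basis _ (loc_lattice p (Sp K p) hN)
  have h1 : Submodule.span (Sp K p) (latticeIndex o K V (dualLattice o K V φ L) L : Set K) ≤
      Submodule.span (Sp K p) (latticeIndex o K V (dualLattice o K V φ N) N : Set K) :=
    Submodule.span_mono hd
  rw [disc_loc hB hN, disc_loc hB hL, ← hl, ← hn, disc_eq φ hB, disc_eq φ hB,
    Submodule.span_singleton_le_iff_mem, Submodule.mem_span_singleton] at h1
  have h2 : Submodule.span (Sp K p) (N : Set V) ≤ Submodule.span (Sp K p) (L : Set V) :=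
    Submodule.span_mono hNL
  rw [← hl, ← hn] at h2 ⊢
  obtain ⟨s, hs⟩ := h1
  exact span_le_of_gram hB h2 ⟨s, by rw [← hs, Algebra.smul_def]⟩

theorem nondeg_of {φ : LinearMap.BilinForm K V} (h2 : (2 : K) ≠ 0) (hsym : ∀ x y, φ x y = φ y x)
    (hnd : ∀ x : V, (∀ y : V, φ x y = 0) → x = 0) :
    LinearMap.BilinForm.Nondegenerate ((2 : K) • φ) := by
  refine ⟨fun x hx => hnd x fun y => ?_, fun x hx => hnd x fun y => ?_⟩
  · have := hx y
    simpa [h2] using this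
  · have := hx y
    rw [hsym]
    simpa [h2] using this

/-- Cancellation of lattices in `K`. -/
theorem mul_cancel' {I J : Submodule o K} {X : Submodule o K} (hX : IsLattice o K K X)
    (h : I * X = J * X) (hof : ¬ IsField o) : I = J := by
  refine eq_of_loc (K := K) fun p hp => ?_
  haveI := sp_dvr (K := K) hof p
  have h1 := congrArg (fun Y : Submodule o K => Submodule.span (Sp K p) (Y : Set K)) h
  simp only [loc_mul] at h1
  obtain ⟨g, hg⟩ := exists_basis _ (loc_lattice p (Sp K p) hX)
  have i0 : Fin (finrank K K) := ⟨0, by simp⟩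
  have hc : Submodule.span (Sp K p) (X : Set K) = Submodule.span (Sp K p) {g i0} := by
    rw [← hg]
    congr 1
    ext y
    have hsub : ∀ i : Fin (finrank K K), i = i0 := by
      intro i
      have h1 : (i : ℕ) < 1 := lt_of_lt_of_eq i.2 (Module.finrank_self K)
      have h2 : (i0 : ℕ) < 1 := lt_of_lt_of_eq i0.2 (Module.finrank_self K)
      ext; omega
    constructor
    · rintro ⟨i, rfl⟩; rw [hsub i]; rfl
    · rintro rfl; exact ⟨i0, rfl⟩
  rw [hc] at h1
  have hinv : Submodule.span (Sp K p) {g i0} * Submodule.span (Sp K p) {(g i0)⁻¹} = 1 := by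
    rw [Submodule.span_mul_span, Set.singleton_mul_singleton, mul_inv_cancel₀ (g.ne_zero i0),
      ← Submodule.one_eq_span]
  have h2 := congrArg (fun Y => Y * Submodule.span (Sp K p) {(g i0)⁻¹}) h1
  beta_reduce at h2
  rw [mul_assoc, mul_assoc, hinv, mul_one, mul_one] at h2
  exact h2

end Global

end MaxLat

open NumberField

/-- Over a number field, with `L` an `𝔬`-maximal lattice in `(V, φ)`,
`h ∈ V` with `φ[h] = q ≠ 0`, `W = (Fh)^⊥` and `M` an `𝔬`-maximal lattice in
`(W, ψ)`: the lattice `L ∩ W` is `𝔬`-maximal in `W` if and only if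
`φ[h]·(2φ(h,L))^{-2} = [M̃/M]·(2[L̃/L])^{-1}`, stated here in the
cross-multiplied form `2q·[L̃/L] = [M̃/M]·(2φ(h,L))²`. -/
theorem intersection_maximal_iff_discriminant_relation
    {F : Type*} [Field F] [NumberField F]
    {V : Type*} [AddCommGroup V] [Module F V] [FiniteDimensional F V]
    [Module (𝓞 F) V] [IsScalarTower (𝓞 F) F V]
    (hdim : 1 < Module.finrank F V)
    (φ : LinearMap.BilinForm F V) (hsym : ∀ x y, φ x y = φ y x)
    (hnd : ∀ x : V, (∀ y : V, φ x y = 0) → x = 0)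
    (L : Submodule (𝓞 F) V) (hL : IsMaximalLattice (𝓞 F) F V φ L)
    (q : F) (hq : q ≠ 0) (h : V) (hh : φ h h = q)
    (W : Submodule F V) (hW : W = LinearMap.ker (φ.flip h))
    (M : Submodule (𝓞 F) ↥W)
    (hM : IsMaximalLattice (𝓞 F) F ↥W (φ.restrict W) M) :
    IsMaximalLattice (𝓞 F) F ↥W (φ.restrict W)
        ((L ⊓ W.restrictScalars (𝓞 F)).comap ((W.subtype).restrictScalars (𝓞 F)))
      ↔
    Submodule.span (𝓞 F) {2 * q} *
        latticeIndex (𝓞 F) F V (dualLattice (𝓞 F) F V φ L) L =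
      latticeIndex (𝓞 F) F ↥W (dualLattice (𝓞 F) F ↥W (φ.restrict W) M) M *
        (Submodule.span (𝓞 F) {(2 : F)} *
          Submodule.span (𝓞 F) ((fun x => φ h x) '' (L : Set V))) ^ 2 := by
  have hof : ¬ IsField (𝓞 F) := NumberField.RingOfIntegers.not_isField F
  have h2 : (2 : F) ≠ 0 := two_ne_zero
  have hB := MaxLat.nondeg_of h2 hsym hnd
  have hW' : ∀ x, x ∈ W ↔ φ h x = 0 := by
    intro x
    rw [hW, LinearMap.mem_ker, LinearMap.BilinForm.flip_apply, hsym]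
  have hsymW : ∀ x y : W, φ.restrict W x y = φ.restrict W y x := fun x y => hsym _ _
  have hndW : ∀ x : W, (∀ y : W, φ.restrict W x y = 0) → x = 0 := by
    intro x hx
    apply Subtype.ext
    refine hnd _ fun z => ?_
    have hw : z - (φ h z / q) • h ∈ W := by
      rw [hW', map_sub, map_smul, hh, smul_eq_mul, div_mul_cancel₀ _ hq, sub_self]
    have h1 : φ (x : V) (z - (φ h z / q) • h) = 0 := hx ⟨_, hw⟩
    have h3 : φ (x : V) h = 0 := by rw [hsym]; exact (hW' _).1 x.2
    rw [map_sub, map_smul, h3, smul_zero, sub_zero] at h1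
    exact h1
  have hBW := MaxLat.nondeg_of h2 hsymW hndW
  set N : Submodule (𝓞 F) W :=
    (L ⊓ W.restrictScalars (𝓞 F)).comap ((W.subtype).restrictScalars (𝓞 F)) with hNdef
  have hN : ∀ x : W, x ∈ N ↔ (x : V) ∈ L := by
    intro x
    simp [hNdef]
  have hNl : IsLattice (𝓞 F) F W N := MaxLat.isLattice_comap hL.1 W N hN
  have hNi : ∀ x ∈ N, φ.restrict W x x ∈ (algebraMap (𝓞 F) F).range :=
    fun x hx => hL.2.1 _ ((hN x).1 hx)
  rw [MaxLat.global_identity hof hsym hB hq hh hW' hBW hL.1 hN]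
  constructor
  · intro hmax
    congr 1
    exact le_antisymm (MaxLat.disc_le hof hsymW hBW hM hmax.1 hmax.2.1)
      (MaxLat.disc_le hof hsymW hBW hmax hM.1 hM.2.1)
  · intro heq
    have hX : IsLattice (𝓞 F) F F ((Submodule.span (𝓞 F) {(2 : F)} *
          Submodule.span (𝓞 F) ((fun x => φ h x) '' (L : Set V))) ^ 2) := by
      constructor
      · refine Submodule.FG.pow (Submodule.FG.mul (Submodule.fg_span_singleton _) ?_) 2
        have h1 : Submodule.span (𝓞 F) ((fun x => φ h x) '' (L : Set V)) =
            L.map ((φ h).restrictScalars (𝓞 F)) := by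
          have h3 := Submodule.span_eq (L.map ((φ h).restrictScalars (𝓞 F)))
          rw [← h3]
          rfl
        rw [h1]
        exact hL.1.1.map _
      · obtain ⟨s, hs, hsL⟩ := MaxLat.exists_smul_mem hL.1.2 h
        have hc : φ h (s • h) ≠ 0 := by
          rw [← algebraMap_smul F s h, map_smul, hh, smul_eq_mul]
          refine mul_ne_zero ?_ hq
          simpa using hs
        have hm : 2 * φ h (s • h) ∈ Submodule.span (𝓞 F) {(2 : F)} *
          Submodule.span (𝓞 F) ((fun x => φ h x) '' (L : Set V)) :=
          Submodule.mul_mem_mul (Submodule.mem_span_singleton_self _)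
            (Submodule.subset_span ⟨_, hsL, rfl⟩)
        have hm2 := Submodule.pow_mem_pow _ hm 2
        have hne : (2 * φ h (s • h)) ^ 2 ≠ 0 := pow_ne_zero _ (mul_ne_zero h2 hc)
        rw [eq_top_iff]
        intro y _
        have h4 := Submodule.smul_mem (Submodule.span F _) (y * ((2 * φ h (s • h)) ^ 2)⁻¹)
          (Submodule.subset_span (R := F) hm2)
        rwa [smul_eq_mul, inv_mul_cancel_right₀ hne] at h4
    have hd := MaxLat.mul_cancel' hX heq hof
    refine ⟨hNl, hNi, fun L' hL' hi hle => le_antisymm ?_ hle⟩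
    refine MaxLat.le_of_disc_le hof hBW hL' hNl hle ?_
    rw [hd]
    exact MaxLat.disc_le hof hsymW hBW hM hL' hi
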